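/- arXiv:1308.0065 — 2 statements merged into one kernel-verified Lean document; each statement's English description precedes it below -/
import Mathlib

section
/- The number of squarefree integers n ≤ y all of whose prime factors are congruent to 1 modulo q is O_q(y (log log y / log y)^{1 - 1/φ(q)}), where φ is Euler's totient function. -/
/-!
If `B` is closed under divisors, then writing `log n = ∑_{m ∣ n} Λ (n / m)` for `n ∈ B` gives
`∑_{n ≤ y, n ∈ B} log n ≤ ∑_{m ≤ y, m ∈ B} ψ (y / m)`, so Chebyshev's bound `ψ x ≪ x` yields
`#{n ≤ y : n ∈ B} * log y ≪ y * ∑_{n ≤ y, n ∈ B} 1 / n`. When `B` consists of the integers all of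
whose prime factors are congruent to `a` modulo `q`, the Euler product bounds the last sum by a
constant times `exp (∑ 1 / p)`, over the primes `p ≤ y` with `p ≡ a (mod q)`. That sum of
reciprocals is at most `log (log y) / φ(q) + O(1)`: the Dirichlet series of `Λ` restricted to the
residue class has a simple pole with residue `1 / φ(q)` at `s = 1`, and one integrates from
`s = 1 + 1 / log y` to `s = 2`. The count is therefore `O(y * (log y) ^ (1 / φ(q) - 1))`.
-/

section

open Finset Real
open ArithmeticFunction hiding log
open scoped Chebyshev

section DivisorClosed

variable {B : Set ℕ} [DecidablePred (· ∈ B)]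

lemma sum_log_le_sum_psi_div (hB : ∀ n ∈ B, ∀ d, d ∣ n → d ∈ B) (N : ℕ) :
    ∑ n ∈ Ioc 0 N with n ∈ B, log n ≤ ∑ m ∈ Ioc 0 N with m ∈ B, ψ (N / m) := by
  let f : ArithmeticFunction ℝ := ⟨fun n ↦ if n ≠ 0 ∧ n ∈ B then 1 else 0, by simp⟩
  have f_nonneg (n : ℕ) : 0 ≤ f n := ite_nonneg zero_le_one le_rfl
  have f_eq_one {n : ℕ} (hn : n ≠ 0) (hnB : n ∈ B) : f n = 1 := if_pos ⟨hn, hnB⟩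
  have f_mul_vonMangoldt {n : ℕ} (hn : n ≠ 0) (hnB : n ∈ B) : (f * Λ) n = log n := by
    rw [← vonMangoldt_sum, ← Nat.sum_divisorsAntidiagonal' (fun _ d ↦ Λ d), mul_apply]
    refine sum_congr rfl fun x hx ↦ ?_
    have hx1 : x.1 ∣ n := Nat.dvd_of_mem_divisors (Nat.fst_mem_divisors_of_mem_antidiagonal hx)
    rw [f_eq_one (ne_zero_of_dvd_ne_zero hn hx1) (hB n hnB _ hx1), one_mul]
  calc ∑ n ∈ Ioc 0 N with n ∈ B, log n
      = ∑ n ∈ Ioc 0 N with n ∈ B, (f * Λ) n := by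
        refine sum_congr rfl fun n hn ↦ ?_
        rw [mem_filter, mem_Ioc] at hn
        rw [f_mul_vonMangoldt hn.1.1.ne' hn.2]
    _ ≤ ∑ n ∈ Ioc 0 N, (f * Λ) n := by
        refine sum_le_sum_of_subset_of_nonneg (filter_subset _ _) fun n _ _ ↦ ?_
        rw [mul_apply]
        exact sum_nonneg fun x _ ↦ mul_nonneg (f_nonneg _) vonMangoldt_nonneg
    _ = ∑ m ∈ Ioc 0 N, f m * ψ (N / m) := by
        simp only [sum_Ioc_mul_eq_sum_sum, Chebyshev.psi, Nat.floor_div_eq_div]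
    _ = ∑ m ∈ Ioc 0 N with m ∈ B, ψ (N / m) := by
        rw [sum_filter]
        refine sum_congr rfl fun m hm ↦ ?_
        simp [f, (mem_Ioc.mp hm).1.ne']

lemma card_mul_log_le_mul_sum_inv (hB : ∀ n ∈ B, ∀ d, d ∣ n → d ∈ B) {x : ℝ} (hx : 0 < x) :
    #{n ∈ Ioc 0 ⌊x⌋₊ | n ∈ B} * log x ≤
      (log 4 + 5) * x * ∑ n ∈ Ioc 0 ⌊x⌋₊ with n ∈ B, (n : ℝ)⁻¹ := by
  have sum_log_le : ∑ n ∈ Ioc 0 ⌊x⌋₊ with n ∈ B, log n ≤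
      ∑ n ∈ Ioc 0 ⌊x⌋₊ with n ∈ B, (log 4 + 4) * x * (n : ℝ)⁻¹ := by
    refine (sum_log_le_sum_psi_div hB _).trans (sum_le_sum fun m _ ↦ ?_)
    calc ψ (⌊x⌋₊ / m)
        ≤ (log 4 + 4) * (⌊x⌋₊ / m) := Chebyshev.psi_le_const_mul_self (by positivity)
      _ ≤ (log 4 + 4) * (x / m) := by gcongr; exact Nat.floor_le hx.le
      _ = (log 4 + 4) * x * (m : ℝ)⁻¹ := by ring
  have sum_log_div_le : ∑ n ∈ Ioc 0 ⌊x⌋₊ with n ∈ B, (log x - log n) ≤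
      ∑ n ∈ Ioc 0 ⌊x⌋₊ with n ∈ B, x * (n : ℝ)⁻¹ := by
    refine sum_le_sum fun n hn ↦ ?_
    have hn0 : (n : ℝ) ≠ 0 := mod_cast (mem_Ioc.mp (mem_filter.mp hn).1).1.ne'
    rw [← log_div hx.ne' hn0, ← div_eq_mul_inv]
    exact log_le_self (by positivity)
  rw [sum_sub_distrib, sum_const, nsmul_eq_mul] at sum_log_div_le
  rw [← mul_sum] at sum_log_le sum_log_div_le
  linarith

end DivisorClosed

lemma sum_inv_le_prod_of_subset_factoredNumbers {F s : Finset ℕ}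
    (hF : (F : Set ℕ) ⊆ Nat.factoredNumbers s) :
    ∑ n ∈ F, (n : ℝ)⁻¹ ≤ ∏ p ∈ s with p.Prime, (1 - (p : ℝ)⁻¹)⁻¹ := by
  let f : ℕ →* ℝ :=
    { toFun n := (n : ℝ)⁻¹
      map_one' := by simp
      map_mul' m n := by simp [mul_comm] }
  have norm_f_lt_one {p : ℕ} (hp : p.Prime) : ‖f p‖ < 1 := by
    simpa [f] using inv_lt_one_of_one_lt₀ (Nat.one_lt_cast (α := ℝ).mpr hp.one_lt)
  have hsum : HasSum (fun m : Nat.factoredNumbers s ↦ (m : ℝ)⁻¹) _ :=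
    (EulerProduct.summable_and_hasSum_factoredNumbers_prod_filter_prime_geometric
      norm_f_lt_one s).2
  rw [← sum_subtype_of_mem (fun n : ℕ ↦ (n : ℝ)⁻¹) hF]
  exact sum_le_hasSum _ (fun m _ ↦ by positivity) hsum

lemma inv_one_sub_le_exp {x : ℝ} (hx : x ≤ 1 / 2) : (1 - x)⁻¹ ≤ exp (x + 2 * x ^ 2) := by
  rw [inv_le_iff_one_le_mul₀ (by linarith)]
  have expansion : (x + 2 * x ^ 2 + 1) * (1 - x) = 1 + x ^ 2 * (1 - 2 * x) := by ring
  calc 1 ≤ (x + 2 * x ^ 2 + 1) * (1 - x) := by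
        rw [expansion]
        exact le_add_of_nonneg_right (mul_nonneg (sq_nonneg x) (by linarith))
    _ ≤ exp (x + 2 * x ^ 2) * (1 - x) := by
        gcongr
        · linarith
        · exact add_one_le_exp _

lemma prod_inv_one_sub_inv_le_exp_sum_inv {P : Finset ℕ} (hP : ∀ p ∈ P, 2 ≤ p) :
    ∏ p ∈ P, (1 - (p : ℝ)⁻¹)⁻¹ ≤ exp (∑ p ∈ P, (p : ℝ)⁻¹ + 2 * ∑' n : ℕ, ((n : ℝ) ^ 2)⁻¹) := by
  have inv_le_half {p : ℕ} (hp : p ∈ P) : (p : ℝ)⁻¹ ≤ 1 / 2 := by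
    rw [one_div]; gcongr; exact_mod_cast hP p hp
  calc ∏ p ∈ P, (1 - (p : ℝ)⁻¹)⁻¹ ≤ ∏ p ∈ P, exp ((p : ℝ)⁻¹ + 2 * (p : ℝ)⁻¹ ^ 2) :=
        prod_le_prod (fun p hp ↦ inv_nonneg.mpr (by linarith [inv_le_half hp]))
          fun p hp ↦ inv_one_sub_le_exp (inv_le_half hp)
    _ = exp (∑ p ∈ P, (p : ℝ)⁻¹ + 2 * ∑ p ∈ P, ((p : ℝ) ^ 2)⁻¹) := by
        simp only [← exp_sum, sum_add_distrib, mul_sum, inv_pow]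
    _ ≤ _ := by
        gcongr
        exact (summable_nat_pow_inv.mpr one_lt_two).sum_le_tsum P fun n _ ↦ by positivity

lemma card_factoredNumbers_mul_log_le (s : Finset ℕ) {x : ℝ} (hx : 0 < x) :
    #{n ∈ Ioc 0 ⌊x⌋₊ | n ∈ Nat.factoredNumbers s} * log x ≤
      (log 4 + 5) * x *
        exp (∑ p ∈ s with p.Prime, (p : ℝ)⁻¹ + 2 * ∑' n : ℕ, ((n : ℝ) ^ 2)⁻¹) := by
  refine (card_mul_log_le_mul_sum_inv (fun _ hn _ ↦ Nat.mem_factoredNumbers_of_dvd hn) hx).trans ?_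
  gcongr
  exact (sum_inv_le_prod_of_subset_factoredNumbers fun n hn ↦ (mem_filter.mp hn).2).trans
    (prod_inv_one_sub_inv_le_exp_sum_inv fun p hp ↦ (mem_filter.mp hp).2.two_le)

lemma one_le_exp_neg_mul {u : ℝ} (hu0 : 0 ≤ u) (hu1 : u ≤ 1) :
    1 ≤ exp (-u) * (1 + exp 1 * u) := by
  have exp_mul_le : exp u * u ≤ exp 1 * u := by gcongr
  have exp_mul_one_sub_le : exp u * (1 - u) ≤ 1 := by
    calc exp u * (1 - u) ≤ exp u * exp (-u) := by gcongr; exact one_sub_le_exp_neg u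
      _ = 1 := by rw [← exp_add, add_neg_cancel, exp_zero]
  rw [exp_neg, ← div_eq_inv_mul, one_le_div (exp_pos u)]
  linarith

lemma inv_le_rpow_neg_mul {x y : ℝ} (hx : 1 ≤ x) (hxy : x ≤ y) :
    x⁻¹ ≤ x ^ (-(1 + 1 / log y)) * (1 + exp 1 / log y * log x) := by
  have hx0 : 0 < x := zero_lt_one.trans_le hx
  have log_le : log x ≤ log y := log_le_log hx0 hxy
  have log_y_nonneg : 0 ≤ log y := (log_nonneg hx).trans log_le
  set u := log x / log y with hu
  calc x⁻¹ ≤ x⁻¹ * (exp (-u) * (1 + exp 1 * u)) :=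
        le_mul_of_one_le_right (by positivity) <| one_le_exp_neg_mul
          (div_nonneg (log_nonneg hx) log_y_nonneg) (div_le_one_of_le₀ log_le log_y_nonneg)
    _ = _ := by
        rw [neg_add, rpow_add hx0, rpow_neg_one, rpow_def_of_pos hx0, hu]
        ring_nf

section DirichletPolynomial

variable {ι : Type*} {t : Finset ι} {x : ι → ℝ}

-- The hypothesis bounds the derivative of `s ↦ -∑ i ∈ t, x i ^ (-s)`.
lemma sum_rpow_neg_le_of_sum_log_mul_rpow_neg_le {c C : ℝ} (hx : ∀ i ∈ t, 0 < x i)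
    (h : ∀ s ∈ Set.Ioc 1 2, ∑ i ∈ t, log (x i) * x i ^ (-s) ≤ c / (s - 1) + C)
    {s : ℝ} (hs : s ∈ Set.Ioc 1 2) :
    ∑ i ∈ t, x i ^ (-s) ≤ ∑ i ∈ t, x i ^ (-2 : ℝ) - c * log (s - 1) + C * (2 - s) := by
  let g : ℝ → ℝ := fun u ↦ ∑ i ∈ t, x i ^ (-u) + c * log (u - 1) + C * u
  have hasDerivAt_g {u : ℝ} (hu : 1 < u) :
      HasDerivAt g (∑ i ∈ t, -(log (x i) * x i ^ (-u)) + c * (1 / (u - 1)) + C * 1) u := by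
    refine ((HasDerivAt.fun_sum fun i hi ↦ ?_).add ?_).add ((hasDerivAt_id u).const_mul C)
    · convert! (hasDerivAt_neg u).const_rpow (hx i hi) using 1
      ring
    · exact (((hasDerivAt_id u).sub_const 1).log (sub_ne_zero.mpr hu.ne')).const_mul c
  have monotoneOn_g : MonotoneOn g (Set.Icc s 2) := by
    have one_lt {u : ℝ} (hu : u ∈ Set.Icc s 2) : 1 < u := hs.1.trans_le hu.1
    refine monotoneOn_of_hasDerivWithinAt_nonneg (convex_Icc s 2)
      (fun u hu ↦ (hasDerivAt_g (one_lt hu)).continuousAt.continuousWithinAt)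
      (fun u hu ↦ (hasDerivAt_g (one_lt (interior_subset hu))).hasDerivWithinAt) fun u hu ↦ ?_
    have u_mem : u ∈ Set.Icc s 2 := interior_subset hu
    rw [sum_neg_distrib, mul_one_div]
    linarith [h u ⟨one_lt u_mem, u_mem.2⟩]
  have g_le : g s ≤ g 2 := monotoneOn_g ⟨le_rfl, hs.2⟩ ⟨hs.2, le_rfl⟩ hs.2
  have log_two_sub_one : log (2 - 1) = 0 := by norm_num
  simp only [g, log_two_sub_one] at g_le
  linarith

lemma sum_inv_le_sum_rpow_neg_add {y : ℝ} (hx : ∀ i ∈ t, x i ∈ Set.Icc 1 y) :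
    ∑ i ∈ t, (x i)⁻¹ ≤ ∑ i ∈ t, x i ^ (-(1 + 1 / log y)) +
      exp 1 / log y * ∑ i ∈ t, log (x i) * x i ^ (-(1 + 1 / log y)) := by
  rw [mul_sum, ← sum_add_distrib]
  refine sum_le_sum fun i hi ↦ (inv_le_rpow_neg_mul (hx i hi).1 (hx i hi).2).trans_eq ?_
  ring

lemma sum_inv_le_of_sum_log_mul_rpow_neg_le {c C y : ℝ} (hC : 0 ≤ C) (hy : exp 1 ≤ y)
    (hx : ∀ i ∈ t, x i ∈ Set.Icc 1 y)
    (h : ∀ s ∈ Set.Ioc 1 2, ∑ i ∈ t, log (x i) * x i ^ (-s) ≤ c / (s - 1) + C) :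
    ∑ i ∈ t, (x i)⁻¹ ≤ ∑ i ∈ t, x i ^ (-2 : ℝ) + c * log (log y) + C + exp 1 * (c + C) := by
  have one_le_log : 1 ≤ log y := (le_log_iff_exp_le ((exp_pos 1).trans_le hy)).mpr hy
  have log_pos : 0 < log y := zero_lt_one.trans_le one_le_log
  have inv_log_pos : 0 < 1 / log y := one_div_pos.mpr log_pos
  have inv_log_le_one : 1 / log y ≤ 1 := by rwa [div_le_one₀ log_pos]
  have hs : 1 + 1 / log y ∈ Set.Ioc (1 : ℝ) 2 := ⟨by linarith, by linarith⟩
  have sum_rpow_le : ∑ i ∈ t, x i ^ (-(1 + 1 / log y)) ≤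
      ∑ i ∈ t, x i ^ (-2 : ℝ) + c * log (log y) + C := by
    have h_rpow := sum_rpow_neg_le_of_sum_log_mul_rpow_neg_le
      (fun i hi ↦ zero_lt_one.trans_le (hx i hi).1) h hs
    have log_sub_one : log (1 + 1 / log y - 1) = -log (log y) := by
      rw [add_sub_cancel_left, one_div, log_inv]
    rw [log_sub_one] at h_rpow
    linarith [mul_le_of_le_one_right hC (show 2 - (1 + 1 / log y) ≤ 1 by linarith)]
  have sum_log_le : exp 1 / log y * ∑ i ∈ t, log (x i) * x i ^ (-(1 + 1 / log y)) ≤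
      exp 1 * (c + C) := by
    calc exp 1 / log y * ∑ i ∈ t, log (x i) * x i ^ (-(1 + 1 / log y))
        ≤ exp 1 / log y * (c / (1 + 1 / log y - 1) + C) := by gcongr; exact h _ hs
      _ = exp 1 * (c + C * (1 / log y)) := by rw [add_sub_cancel_left]; field_simp
      _ ≤ exp 1 * (c + C) := by gcongr; exact mul_le_of_le_one_right hC inv_log_le_one
  linarith [sum_inv_le_sum_rpow_neg_add hx]

end DirichletPolynomial

section ArithmeticProgression

open vonMangoldt

variable {q : ℕ} [NeZero q] {a : ZMod q}

lemma exists_tsum_residueClass_le (ha : IsUnit a) :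
    ∃ C ≥ 0, ∀ s ∈ Set.Ioc (1 : ℝ) 2,
      ∑' n, residueClass a n / (n : ℝ) ^ s ≤ (q.totient : ℝ)⁻¹ / (s - 1) + C := by
  have continuousOn_aux : ContinuousOn (fun s : ℝ ↦ LFunctionResidueClassAux a s) (Set.Icc 1 2) :=
    (continuousOn_LFunctionResidueClassAux a).comp Complex.continuous_ofReal.continuousOn
      fun s hs ↦ by simpa using hs.1
  obtain ⟨C, hC⟩ := isCompact_Icc.exists_bound_of_continuousOn continuousOn_aux
  refine ⟨C, (norm_nonneg _).trans (hC 1 ⟨le_rfl, one_le_two⟩), fun s hs ↦ ?_⟩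
  have ofReal_tsum : ((∑' n, residueClass a n / (n : ℝ) ^ s : ℝ) : ℂ) =
      (q.totient : ℂ)⁻¹ / (s - 1) + LFunctionResidueClassAux a s := by
    rw [eqOn_LFunctionResidueClassAux ha (by simpa using hs.1), add_sub_cancel, LSeries,
      Complex.ofReal_tsum]
    refine tsum_congr fun n ↦ ?_
    rcases eq_or_ne n 0 with rfl | hn
    · simp
    · simp [LSeries.term_of_ne_zero hn, Complex.ofReal_cpow]
  have norm_pole : ‖(q.totient : ℂ)⁻¹ / (s - 1)‖ = (q.totient : ℝ)⁻¹ / (s - 1) := by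
    rw [← Complex.ofReal_one, ← Complex.ofReal_sub, norm_div,
      Complex.norm_of_nonneg (sub_nonneg.mpr hs.1.le), norm_inv, Complex.norm_natCast]
  calc ∑' n, residueClass a n / (n : ℝ) ^ s
      ≤ ‖((∑' n, residueClass a n / (n : ℝ) ^ s : ℝ) : ℂ)‖ := by
        rw [Complex.norm_real]; exact le_norm_self _
    _ ≤ _ := by
        rw [ofReal_tsum, ← norm_pole]
        exact norm_add_le_of_le le_rfl (hC s ⟨hs.1.le, hs.2⟩)

lemma exists_sum_log_mul_rpow_neg_le (ha : IsUnit a) :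
    ∃ C ≥ 0, ∀ P : Finset ℕ, (∀ p ∈ P, p.Prime ∧ (p : ZMod q) = a) → ∀ s ∈ Set.Ioc (1 : ℝ) 2,
      ∑ p ∈ P, log p * (p : ℝ) ^ (-s) ≤ (q.totient : ℝ)⁻¹ / (s - 1) + C := by
  obtain ⟨C, hC0, hC⟩ := exists_tsum_residueClass_le ha
  refine ⟨C, hC0, fun P hP s hs ↦ le_trans ?_ (hC s hs)⟩
  have summable_residueClass : Summable fun n : ℕ ↦ residueClass a n / (n : ℝ) ^ s :=
    LSeries.summable_real_of_abscissaOfAbsConv_lt <|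
      (abscissaOfAbsConv_residueClass_le_one a).trans_lt (mod_cast hs.1)
  calc ∑ p ∈ P, log p * (p : ℝ) ^ (-s) = ∑ p ∈ P, residueClass a p / (p : ℝ) ^ s := by
        refine sum_congr rfl fun p hp ↦ ?_
        have hpa : p ∈ {n : ℕ | (n : ZMod q) = a} := (hP p hp).2
        rw [residueClass, Set.indicator_of_mem hpa, vonMangoldt_apply_prime (hP p hp).1,
          rpow_neg p.cast_nonneg, div_eq_mul_inv]
    _ ≤ ∑' n, residueClass a n / (n : ℝ) ^ s :=
        summable_residueClass.sum_le_tsum P fun n _ ↦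
          div_nonneg (residueClass_nonneg a n) (by positivity)

lemma exists_sum_prime_inv_le (ha : IsUnit a) :
    ∃ C, ∀ y : ℝ, exp 1 ≤ y →
      ∑ p ∈ Ioc 0 ⌊y⌋₊ with Nat.Prime p ∧ (p : ZMod q) = a, (p : ℝ)⁻¹ ≤
        (q.totient : ℝ)⁻¹ * log (log y) + C := by
  obtain ⟨C, hC0, hC⟩ := exists_sum_log_mul_rpow_neg_le ha
  refine ⟨∑' n : ℕ, (n : ℝ) ^ (-2 : ℝ) + C + exp 1 * ((q.totient : ℝ)⁻¹ + C), fun y hy ↦ ?_⟩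
  set P : Finset ℕ := {p ∈ Ioc 0 ⌊y⌋₊ | Nat.Prime p ∧ (p : ZMod q) = a}
  have cast_mem_Icc : ∀ p ∈ P, (p : ℝ) ∈ Set.Icc 1 y := fun p hp ↦ by
    obtain ⟨hp0, hpy⟩ := mem_Ioc.mp (mem_filter.mp hp).1
    exact ⟨mod_cast hp0, (Nat.le_floor_iff' hp0.ne').mp hpy⟩
  have sum_le_tsum : ∑ p ∈ P, (p : ℝ) ^ (-2 : ℝ) ≤ ∑' n : ℕ, (n : ℝ) ^ (-2 : ℝ) :=
    (summable_nat_rpow.mpr (by norm_num)).sum_le_tsum P fun n _ ↦ by positivity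
  linarith [sum_inv_le_of_sum_log_mul_rpow_neg_le hC0 hy cast_mem_Icc
    (hC P fun p hp ↦ (mem_filter.mp hp).2)]

end ArithmeticProgression

lemma card_primeFactors_mem_residueClass_mul_log_le {q : ℕ} (a : ZMod q) {y : ℝ}
    (hy : 0 < y) :
    Nat.card {n : ℕ | 1 ≤ n ∧ (n : ℝ) ≤ y ∧ ∀ p : ℕ, p.Prime → p ∣ n → (p : ZMod q) = a} * log y ≤
      (log 4 + 5) * y * exp (∑ p ∈ Ioc 0 ⌊y⌋₊ with Nat.Prime p ∧ (p : ZMod q) = a, (p : ℝ)⁻¹ +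
        2 * ∑' n : ℕ, ((n : ℝ) ^ 2)⁻¹) := by
  set P : Finset ℕ := {p ∈ Ioc 0 ⌊y⌋₊ | Nat.Prime p ∧ (p : ZMod q) = a} with hP
  have filter_prime : {p ∈ P | p.Prime} = P :=
    filter_true_of_mem fun p hp ↦ (mem_filter.mp hp).2.1
  have setOf_eq : {n : ℕ | 1 ≤ n ∧ (n : ℝ) ≤ y ∧ ∀ p : ℕ, p.Prime → p ∣ n → (p : ZMod q) = a} =
      ({n ∈ Ioc 0 ⌊y⌋₊ | n ∈ Nat.factoredNumbers P} : Finset ℕ) := by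
    ext n
    simp only [Set.mem_ofPred_eq, coe_filter, mem_Ioc, Nat.mem_factoredNumbers', hP, mem_filter,
      Nat.le_floor_iff hy.le, and_assoc]
    refine and_congr_right fun hn ↦ and_congr_right fun hny ↦ forall₃_congr fun p hp hpn ↦ ?_
    have hpy : (p : ℝ) ≤ y := le_trans (mod_cast Nat.le_of_dvd hn hpn) hny
    simp only [hp.pos, hpy, hp, true_and]
  rw [setOf_eq, Nat.card_coe_set_eq, Set.ncard_coe_finset]
  simpa only [filter_prime] using card_factoredNumbers_mul_log_le P hy

lemma card_squarefree_mod_eq_one_le (q : ℕ) (y : ℝ) :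
    Nat.card {n : ℕ | 1 ≤ n ∧ (n : ℝ) ≤ y ∧ Squarefree n ∧ ∀ p : ℕ, p.Prime → p ∣ n → p % q = 1} ≤
      Nat.card {n : ℕ | 1 ≤ n ∧ (n : ℝ) ≤ y ∧
        ∀ p : ℕ, p.Prime → p ∣ n → (p : ZMod q) = 1} := by
  have cast_eq_one {p : ℕ} (hp : p % q = 1) : (p : ZMod q) = 1 := by
    rw [← ZMod.natCast_mod, hp, Nat.cast_one]
  refine Nat.card_mono ((Set.finite_Iic ⌊y⌋₊).subset fun n hn ↦ Nat.le_floor hn.2.1) ?_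
  exact fun n hn ↦ ⟨hn.1, hn.2.1, fun p hp hpn ↦ cast_eq_one (hn.2.2.2 p hp hpn)⟩

lemma div_log_rpow_le_mul_log_log_div_log_rpow {x y b : ℝ} (hx : 0 ≤ x) (hb : 0 ≤ b)
    (hy : exp (exp 1) ≤ y) : x / log y ^ b ≤ x * (log (log y) / log y) ^ b := by
  have hy0 : 0 < y := (exp_pos _).trans_le hy
  have exp_one_le_log : exp 1 ≤ log y := (le_log_iff_exp_le hy0).mpr hy
  have log_pos : 0 < log y := (exp_pos 1).trans_le exp_one_le_log
  have one_le_log_log : 1 ≤ log (log y) := (le_log_iff_exp_le log_pos).mpr exp_one_le_log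
  rw [div_rpow (zero_le_one.trans one_le_log_log) log_pos.le, ← mul_div_assoc]
  gcongr
  exact le_mul_of_one_le_right hx (one_le_rpow one_le_log_log hb)

theorem count_squarefree_with_primes_one_mod_q_general {q : ℕ} [NeZero q] {a : ZMod q}
    (ha : IsUnit a) :
    ∃ C ≥ 0, ∀ y : ℝ, exp 1 ≤ y →
      (Nat.card {n : ℕ | 1 ≤ n ∧ (n : ℝ) ≤ y ∧
          ∀ p : ℕ, p.Prime → p ∣ n → (p : ZMod q) = a} : ℝ) ≤
        C * y / log y ^ (1 - 1 / q.totient : ℝ) := by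
  obtain ⟨C, hC⟩ := exists_sum_prime_inv_le ha
  refine ⟨(log 4 + 5) * exp (C + 2 * ∑' n : ℕ, ((n : ℝ) ^ 2)⁻¹), by positivity, fun y hy ↦ ?_⟩
  have hy0 : 0 < y := (exp_pos 1).trans_le hy
  have log_pos : 0 < log y := zero_lt_one.trans_le ((le_log_iff_exp_le hy0).mpr hy)
  rw [rpow_sub log_pos, rpow_one, div_div_eq_mul_div, le_div_iff₀ log_pos]
  calc _ ≤ _ := card_primeFactors_mem_residueClass_mul_log_le a hy0
    _ ≤ (log 4 + 5) * y * exp (((q.totient : ℝ)⁻¹ * log (log y) + C) +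
          2 * ∑' n : ℕ, ((n : ℝ) ^ 2)⁻¹) := by
        gcongr
        exact hC y hy
    _ = _ := by
        rw [rpow_def_of_pos log_pos, add_assoc, exp_add, one_div, mul_comm (log (log y))]
        ring

end

theorem count_squarefree_with_primes_one_mod_q (q : ℕ) (hq : 2 ≤ q) :
    ∃ C y₀ : ℝ, ∀ y : ℝ, y₀ ≤ y →
      (Nat.card {n : ℕ | 1 ≤ n ∧ (n : ℝ) ≤ y ∧ Squarefree n ∧
          ∀ p : ℕ, p.Prime → p ∣ n → p % q = 1} : ℝ) ≤
        C * y * (Real.log (Real.log y) / Real.log y) ^ ((1 : ℝ) - 1 / q.totient) := by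
  have : NeZero q := ⟨by lia⟩
  obtain ⟨C, hC0, hC⟩ := count_squarefree_with_primes_one_mod_q_general (isUnit_one (M := ZMod q))
  refine ⟨C, Real.exp (Real.exp 1), fun y hy ↦ ?_⟩
  have exp_one_le : Real.exp 1 ≤ y := (Real.exp_le_exp.mpr (by simp)).trans hy
  have exponent_nonneg : (0 : ℝ) ≤ 1 - 1 / q.totient :=
    sub_nonneg.mpr (one_div (q.totient : ℝ) ▸ Nat.cast_inv_le_one _)
  have y_nonneg : 0 ≤ y := (Real.exp_pos 1).le.trans exp_one_le
  calc _ ≤ _ := Nat.cast_le.mpr (card_squarefree_mod_eq_one_le q y)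
    _ ≤ C * y / Real.log y ^ ((1 : ℝ) - 1 / q.totient) := hC y exp_one_le
    _ ≤ _ := div_log_rpow_le_mul_log_log_div_log_rpow (by positivity) exponent_nonneg hy
end

section
/- For an algebraic number field K of degree n₀ over Q, the number a(n) of integral ideals of norm n satisfies a(n) ≤ d(n)^{n₀ - 1}, where d(n) is the number of divisors of n. -/
/-!
For a prime number `p`, the `p`-adic valuation of `N(I)` is the sum of the valuations of
`N(P ^ v_P(I))` over the primes `P` above `p`, and these summands determine every `v_P(I)`. An ideal
of norm `n` is therefore determined by a choice, for each `p ∣ n`, of a weak composition of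
`k = v_p(n)` into `g ≤ n₀` parts. One of the parts is determined by the others, so
there are at most `(k + 1) ^ (g - 1)` of these, and `∏ (k + 1)` is the number of divisors of `n`.
-/

open Ideal Module UniqueFactorizationMonoid

theorem multichoose_le_succ_pow (g k : ℕ) : g.multichoose k ≤ (k + 1) ^ (g - 1) := by
  cases g with
  | zero => cases k <;> simp
  | succ g =>
    calc (g + 1).multichoose k
        = (g + k).choose g := by
          rw [Nat.multichoose_eq, Nat.add_right_comm, Nat.add_sub_cancel, Nat.choose_symm_add]
      _ ≤ (g + k + 1 - g) ^ g := Nat.choose_le_sub_pow ..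
      _ = (k + 1) ^ g := by rw [add_assoc, Nat.add_sub_cancel_left]

theorem ncard_primesOver_le_finrank {A B : Type*} [CommRing A] [IsDomain A] [CommRing B]
    [Algebra A B] [Module.Finite A B] [Flat A B] (𝔭 : Ideal A) [𝔭.IsPrime] :
    (𝔭.primesOver B).ncard ≤ finrank A B := by
  have := (Algebra.QuasiFinite.finite_primesOver (S := B) 𝔭).fintype
  rw [← Nat.card_coe_set_eq, Nat.card_eq_fintype_card, ← Finset.card_univ,
    ← sum_ramification_inertia_eq_finrank 𝔭 B, Finset.card_eq_sum_ones]
  refine Finset.sum_le_sum fun 𝔓 _ ↦ ?_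
  have : 𝔓.1.IsPrime := 𝔓.2.1
  exact Nat.mul_pos (ramificationIdx_pos 𝔓.1 A) (inertiaDeg_pos 𝔓.1 A)

theorem prime_of_factorization_ne_zero {α : Type*} [CommMonoidWithZero α]
    [UniqueFactorizationMonoid α] [NormalizationMonoid α] [DecidableEq α] {a p : α}
    (h : factorization a p ≠ 0) : Prime p := by
  rw [factorization_eq_count, Multiset.count_ne_zero] at h
  exact prime_of_normalized_factor p h

section DedekindDomain

variable {R : Type*} [CommRing R] [IsDedekindDomain R] [Free ℤ R]

theorem mem_primesOver_of_dvd_absNorm [Module.Finite ℤ R] {p : ℕ} (hp : p.Prime) {P : Ideal R}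
    (hP : Prime P) (hpP : p ∣ absNorm P) : P ∈ (span {(p : ℤ)}).primesOver R := by
  obtain ⟨Q, hQ, hQp, hQP⟩ := exists_isMaximal_dvd_of_dvd_absNorm' hp P hpP
  obtain rfl : P = Q :=
    ((isPrime_of_prime hP).isMaximal hP.ne_zero).eq_of_le hQ.ne_top (le_of_dvd hQP)
  exact ⟨hQ.isPrime, ⟨hQp.symm⟩⟩

section AbsNormExponents

variable [DecidableEq (Ideal R)]

/-- The finitely supported function `P ↦ v_p(N(P ^ v_P(I)))` on the ideals of `R`, which records how
the `p`-adic valuation of `N(I)` is distributed among the prime factors of `I`. -/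
noncomputable def absNormExponents (p : ℕ) (I : Ideal R) : Ideal R →₀ ℕ :=
  (fun P : Ideal R ↦ (absNorm P).factorization p) • factorization I

theorem absNormExponents_apply (p : ℕ) (I P : Ideal R) :
    absNormExponents p I P = (absNorm P).factorization p * factorization I P := rfl

theorem absNormExponents_zero (p : ℕ) : absNormExponents p (0 : Ideal R) = 0 := by
  rw [absNormExponents, factorization_zero, smul_zero]

theorem absNormExponents_one (p : ℕ) : absNormExponents p (1 : Ideal R) = 0 := by
  rw [absNormExponents, factorization_one, smul_zero]

theorem absNormExponents_mul (p : ℕ) {I J : Ideal R} (hI : I ≠ 0) (hJ : J ≠ 0) :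
    absNormExponents p (I * J) = absNormExponents p I + absNormExponents p J := by
  rw [absNormExponents, factorization_mul hI hJ, smul_add, absNormExponents, absNormExponents]

theorem absNormExponents_of_prime (p : ℕ) {P : Ideal R} (hP : Prime P) :
    absNormExponents p P = Finsupp.single P ((absNorm P).factorization p) := by
  ext Q
  rw [absNormExponents_apply, factorization_eq_count, normalizedFactors_irreducible hP.irreducible,
    normalize_eq, Multiset.count_singleton, Finsupp.single_apply]
  grind

variable [Module.Finite ℤ R]

theorem degree_absNormExponents (p : ℕ) (I : Ideal R) :
    (absNormExponents p I).degree = (absNorm I).factorization p := by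
  induction I using induction_on_prime with
  | h₁ => rw [absNormExponents_zero]; simp
  | h₂ I hI =>
    obtain rfl : I = 1 := isUnit_iff_eq_one.mp hI
    rw [absNormExponents_one]
    simp
  | h₃ I P hI hP ih =>
    rw [absNormExponents_mul p hP.ne_zero hI, map_add, absNormExponents_of_prime p hP,
      Finsupp.degree_single, ih, map_mul,
      Nat.factorization_mul (absNorm_eq_zero_iff.not.mpr hP.ne_zero)
        (absNorm_eq_zero_iff.not.mpr hI), Finsupp.add_apply]

theorem absNormExponents_eq_zero_iff {p : ℕ} {I : Ideal R} :
    absNormExponents p I = 0 ↔ (absNorm I).factorization p = 0 := by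
  rw [← degree_absNormExponents, Finsupp.degree_eq_zero_iff]

theorem absNormExponents_mem_finsuppAntidiag {p : ℕ} (hp : p.Prime) (I : Ideal R) :
    absNormExponents p I ∈
      (Algebra.QuasiFinite.finite_primesOver (S := R) (span {(p : ℤ)})).toFinset.finsuppAntidiag
        ((absNorm I).factorization p) := by
  refine Finset.mem_finsuppAntidiag'.mpr ⟨degree_absNormExponents p I, fun P hP ↦ ?_⟩
  rw [Finsupp.mem_support_iff, absNormExponents_apply] at hP
  rw [Set.Finite.mem_toFinset]
  exact mem_primesOver_of_dvd_absNorm hp (prime_of_factorization_ne_zero (right_ne_zero_of_mul hP))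
    (Nat.dvd_of_factorization_pos (left_ne_zero_of_mul hP))

theorem eq_of_absNormExponents_eq {I J : Ideal R} (hI : I ≠ ⊥) (hJ : J ≠ ⊥)
    (h : ∀ p, p.Prime → absNormExponents p I = absNormExponents p J) : I = J := by
  suffices factorization I = factorization J from
    associated_iff_eq.mp (associated_of_factorization_eq I J hI hJ this)
  ext P
  by_cases hP : Prime P
  · obtain ⟨p, hp, hpP⟩ : ∃ p, p.Prime ∧ p ∣ absNorm P :=
      Nat.exists_prime_and_dvd fun hP1 ↦
        (isPrime_of_prime hP).ne_top (absNorm_eq_one_iff.mp hP1)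
    have hpos : 0 < (absNorm P).factorization p :=
      hp.factorization_pos_of_dvd (absNorm_eq_zero_iff.not.mpr hP.ne_zero) hpP
    have hpIJ := DFunLike.congr_fun (h p hp) P
    rw [absNormExponents_apply, absNormExponents_apply] at hpIJ
    exact Nat.eq_of_mul_eq_mul_left hpos hpIJ
  · have factorization_eq_zero (L : Ideal R) : factorization L P = 0 :=
      not_ne_iff.mp (mt prime_of_factorization_ne_zero hP)
    rw [factorization_eq_zero, factorization_eq_zero]

end AbsNormExponents

variable (R) [Module.Finite ℤ R]

theorem card_absNorm_eq_le_prod_multichoose {n : ℕ} (hn : n ≠ 0) :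
    Nat.card {I : Ideal R // absNorm I = n} ≤
      ∏ p ∈ n.primeFactors,
        ((span {(p : ℤ)}).primesOver R).ncard.multichoose (n.factorization p) := by
  classical
  let s (p : ℕ) : Finset (Ideal R) :=
    (Algebra.QuasiFinite.finite_primesOver (S := R) (span {(p : ℤ)})).toFinset
  let f (I : {I : Ideal R // absNorm I = n}) (p : n.primeFactors) :
      (s p).finsuppAntidiag (n.factorization p) :=
    ⟨absNormExponents p I.1, by
      simpa only [I.2] using
        absNormExponents_mem_finsuppAntidiag (Nat.prime_of_mem_primeFactors p.2) I.1⟩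
  have ne_bot (I : {I : Ideal R // absNorm I = n}) : I.1 ≠ ⊥ :=
    absNorm_eq_zero_iff.not.mp (I.2.trans_ne hn)
  have f_injective : f.Injective := by
    refine fun I J hIJ ↦ Subtype.ext (eq_of_absNormExponents_eq (ne_bot I) (ne_bot J) fun p _ ↦ ?_)
    by_cases hpn : p ∈ n.primeFactors
    · exact congrArg Subtype.val (congrFun hIJ ⟨p, hpn⟩)
    · rw [← Nat.support_factorization, Finsupp.notMem_support_iff] at hpn
      rw [absNormExponents_eq_zero_iff.mpr (by rwa [I.2]),
        absNormExponents_eq_zero_iff.mpr (by rwa [J.2])]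
  calc Nat.card {I : Ideal R // absNorm I = n}
      ≤ Nat.card (∀ p : n.primeFactors, (s p).finsuppAntidiag (n.factorization p)) :=
        Nat.card_le_card_of_injective f f_injective
    _ = ∏ p ∈ n.primeFactors, ((s p).finsuppAntidiag (n.factorization p)).card := by
        rw [Nat.card_pi, ← Finset.prod_coe_sort n.primeFactors]
        simp only [Nat.card_eq_fintype_card, Fintype.card_coe]
    _ = ∏ p ∈ n.primeFactors,
          ((span {(p : ℤ)}).primesOver R).ncard.multichoose (n.factorization p) := by
        simp only [Finset.card_finsuppAntidiag_nat_eq_multichoose, s,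
          ← Set.ncard_eq_toFinset_card]

theorem ideal_count_le_divisor_count_pow_general {n : ℕ} (hn : n ≠ 0) :
    Nat.card {I : Ideal R // absNorm I = n} ≤ n.divisors.card ^ (finrank ℤ R - 1) := by
  calc Nat.card {I : Ideal R // absNorm I = n}
      ≤ ∏ p ∈ n.primeFactors,
          ((span {(p : ℤ)}).primesOver R).ncard.multichoose (n.factorization p) :=
        card_absNorm_eq_le_prod_multichoose R hn
    _ ≤ ∏ p ∈ n.primeFactors, (n.factorization p + 1) ^ (finrank ℤ R - 1) := by
        refine Finset.prod_le_prod' fun p hp ↦ (multichoose_le_succ_pow _ _).trans ?_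
        have : (span {(p : ℤ)}).IsPrime :=
          isPrime_span_singleton_of_prime
            (Nat.prime_iff_prime_int.mp (Nat.prime_of_mem_primeFactors hp))
        gcongr
        · exact Nat.le_add_left ..
        · exact ncard_primesOver_le_finrank _
    _ = n.divisors.card ^ (finrank ℤ R - 1) := by
        rw [Finset.prod_pow, Nat.card_divisors hn]

end DedekindDomain

theorem ideal_count_le_divisor_count_pow (K : Type*) [Field K] [NumberField K]
    (n : ℕ) (hn : 0 < n) :
    Nat.card {I : Ideal (NumberField.RingOfIntegers K) // Ideal.absNorm I = n} ≤
      n.divisors.card ^ (Module.finrank ℚ K - 1) := by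
  rw [← NumberField.RingOfIntegers.rank K]
  exact ideal_count_le_divisor_count_pow_general _ hn.ne'
end
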